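/- Let R and S be distinct elements of a signature 𝓡, let σ be an sp-formula containing at least one occurrence of ◇_S and no occurrence of ◇_R, and let q be a propositional variable not occurring in σ. Then the spi-logic axiomatised by {◇_R σ → q} is not complete: {◇_R σ → q} ⊨_Kr (◇_S ◇_R σ → ◇_R σ), but there is a (two-element) SLO validating ◇_R σ → q that does not validate ◇_S ◇_R σ → ◇_R σ, so {◇_R σ → q} ⊭_SLO (◇_S ◇_R σ → ◇_R σ). -/

import Mathlib

/-- Strictly positive modal formulas over a signature `Sig`:
propositional variables, `⊤`, conjunction, and a diamond `◇_r` for each `r : Sig`. -/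
inductive SP (Sig : Type) : Type
  | var : ℕ → SP Sig
  | top : SP Sig
  | and : SP Sig → SP Sig → SP Sig
  | dia : Sig → SP Sig → SP Sig

/-- An sp-implication `σ → τ` is a pair of sp-formulas. -/
abbrev SPImp (Sig : Type) := SP Sig × SP Sig

/-- A SLO of signature `Sig`: a meet-semilattice with a greatest element,
equipped with a monotone unary operator for each element of the signature. -/
structure SLO (Sig : Type) where
  carrier : Type
  [instInf : SemilatticeInf carrier]
  [instTop : OrderTop carrier]
  dia : Sig → carrier → carrier
  mono : ∀ r : Sig, Monotone (dia r)

attribute [instance] SLO.instInf SLO.instTop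

namespace SLO

variable {Sig : Type}

/-- Evaluation of an sp-formula in a SLO under a valuation of the variables. -/
def eval (A : SLO Sig) (v : ℕ → A.carrier) : SP Sig → A.carrier
  | .var n => v n
  | .top => ⊤
  | .and φ ψ => eval A v φ ⊓ eval A v ψ
  | .dia r φ => A.dia r (eval A v φ)

/-- A SLO validates an sp-implication `σ → τ` if under every valuation
the value of `σ` is below the value of `τ`. -/
def Valid (A : SLO Sig) (ι : SPImp Sig) : Prop :=
  ∀ v : ℕ → A.carrier, eval A v ι.1 ≤ eval A v ι.2

/-- A SLO validates a set of sp-implications. -/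
def ValidSet (A : SLO Sig) (Ax : Set (SPImp Sig)) : Prop :=
  ∀ ι ∈ Ax, Valid A ι

end SLO

/-- A Kripke frame: a nonempty type of worlds with a binary accessibility
relation for each element of the signature. -/
structure KFrame (Sig : Type) where
  world : Type
  [instNonempty : Nonempty world]
  rel : Sig → world → world → Prop

attribute [instance] KFrame.instNonempty

namespace KFrame

variable {Sig : Type}

/-- Truth of an sp-formula at a world of a Kripke model `(F, v)`. -/
def truth (F : KFrame Sig) (v : ℕ → Set F.world) : SP Sig → F.world → Prop
  | .var n, w => w ∈ v n
  | .top, _ => True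
  | .and φ ψ, w => truth F v φ w ∧ truth F v ψ w
  | .dia r φ, w => ∃ u, F.rel r w u ∧ truth F v φ u

/-- A frame validates an sp-implication `σ → τ` if in every Kripke model on it,
at every world, truth of `σ` implies truth of `τ`. -/
def Valid (F : KFrame Sig) (ι : SPImp Sig) : Prop :=
  ∀ (v : ℕ → Set F.world) (w : F.world), truth F v ι.1 w → truth F v ι.2 w

/-- A frame validates a set of sp-implications. -/
def ValidSet (F : KFrame Sig) (Ax : Set (SPImp Sig)) : Prop :=
  ∀ ι ∈ Ax, Valid F ι

/-- The complex algebra `F*` of a frame, as a SLO: all subsets of the worlds,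
with intersection as meet, the whole set as `⊤`, and
`◇_r X = {w | ∃ u ∈ X, rel r w u}`. -/
def cmpl (F : KFrame Sig) : SLO Sig where
  carrier := Set F.world
  dia r X := {w | ∃ u ∈ X, F.rel r w u}
  mono r := by
    intro X Y hXY w hw
    obtain ⟨u, hu, hr⟩ := hw
    exact ⟨u, hXY hu, hr⟩

end KFrame

/-- An sp-embedding between SLOs: an injective map preserving `⊤`,
binary meets, and each operator. -/
def IsSpEmbedding {Sig : Type} (A B : SLO Sig) (η : A.carrier → B.carrier) : Prop :=
  Function.Injective η ∧ η ⊤ = ⊤ ∧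
    (∀ a b : A.carrier, η (a ⊓ b) = η a ⊓ η b) ∧
    ∀ (r : Sig) (a : A.carrier), η (A.dia r a) = B.dia r (η a)

/-- `Ax ⊨_Kr ι`: every frame validating every member of `Ax` validates `ι`. -/
def KrCons {Sig : Type} (Ax : Set (SPImp Sig)) (ι : SPImp Sig) : Prop :=
  ∀ F : KFrame Sig, F.ValidSet Ax → F.Valid ι

/-- `Ax ⊨_SLO ι`: every SLO validating every member of `Ax` validates `ι`. -/
def SLOCons {Sig : Type} (Ax : Set (SPImp Sig)) (ι : SPImp Sig) : Prop :=
  ∀ A : SLO Sig, A.ValidSet Ax → A.Valid ι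

/-- The spi-logic axiomatised by `Ax` is complete:
`Ax ⊨_Kr ι` iff `Ax ⊨_SLO ι` for every sp-implication `ι`. -/
def IsCompleteLogic {Sig : Type} (Ax : Set (SPImp Sig)) : Prop :=
  ∀ ι : SPImp Sig, KrCons Ax ι ↔ SLOCons Ax ι

/-- The spi-logic axiomatised by `Ax` is complex: every SLO validating every
member of `Ax` sp-embeds into the complex algebra of some frame validating
every member of `Ax`. -/
def IsComplexLogic {Sig : Type} (Ax : Set (SPImp Sig)) : Prop :=
  ∀ A : SLO Sig, A.ValidSet Ax →
    ∃ F : KFrame Sig, F.ValidSet Ax ∧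
      ∃ η : A.carrier → (KFrame.cmpl F).carrier, IsSpEmbedding A (KFrame.cmpl F) η

/-- The unimodal diamond. -/
def SP.d (φ : SP Unit) : SP Unit := SP.dia () φ

/-- `p → ◇p` (reflexivity). -/
def e_refl : SPImp Unit := (SP.var 0, (SP.var 0).d)

/-- `◇◇p → ◇p` (transitivity). -/
def e_trans : SPImp Unit := (((SP.var 0).d).d, (SP.var 0).d)

/-- `q ∧ ◇p → ◇(p ∧ ◇q)` (symmetry). -/
def e_sym : SPImp Unit :=
  ((SP.var 1).and ((SP.var 0).d), ((SP.var 0).and ((SP.var 1).d)).d)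

/-- The sp-formula contains an occurrence of the diamond `◇_r`. -/
def SP.ContainsDia {Sig : Type} (r : Sig) : SP Sig → Prop
  | .var _ => False
  | .top => False
  | .and φ ψ => φ.ContainsDia r ∨ ψ.ContainsDia r
  | .dia s φ => s = r ∨ φ.ContainsDia r

/-- The sp-formula contains an occurrence of the variable `n`. -/
def SP.HasVar {Sig : Type} (n : ℕ) : SP Sig → Prop
  | .var m => m = n
  | .top => False
  | .and φ ψ => φ.HasVar n ∨ ψ.HasVar n
  | .dia _ φ => φ.HasVar n

/-!
Since `q` does not occur in `◇_R σ`, a valuation making `q` false everywhere does not affect the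
truth of `◇_R σ`. A frame validating `◇_R σ → q` therefore makes `◇_R σ` false at every world, and
with it `◇_S ◇_R σ`, as the Kripke diamond preserves falsity. The diamonds of a SLO are only
monotone and need not preserve a least element: in the two-element SLO where `◇_R` is constantly `⊥`
and every other diamond is constantly `⊤`, the value of `◇_R σ` is `⊥` but that of `◇_S ◇_R σ`
is `⊤`.
-/

namespace KFrame

variable {Sig : Type} {F : KFrame Sig}

theorem validSet_singleton {ι : SPImp Sig} : F.ValidSet {ι} ↔ F.Valid ι := by
  simp only [ValidSet, Set.mem_singleton_iff, forall_eq]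

theorem truth_congr {v v' : ℕ → Set F.world} {φ : SP Sig}
    (h : ∀ n, φ.HasVar n → v n = v' n) (w : F.world) : F.truth v φ w ↔ F.truth v' φ w := by
  induction φ generalizing w with
  | var n => simp only [truth, h n rfl]
  | top => rfl
  | and φ ψ ihφ ihψ =>
    exact and_congr (ihφ (fun n hn => h n (.inl hn)) w) (ihψ (fun n hn => h n (.inr hn)) w)
  | dia r φ ih => exact exists_congr fun u => and_congr_right fun _ => ih h u

theorem Valid.not_truth_of_not_hasVar {φ : SP Sig} {q : ℕ} (hF : F.Valid (φ, .var q))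
    (hq : ¬ φ.HasVar q) (v : ℕ → Set F.world) (w : F.world) : ¬ F.truth v φ w := by
  intro hφ
  have agree : ∀ n, φ.HasVar n → v n = Function.update v q ∅ n := by
    intro n hn
    have hne : n ≠ q := fun h => hq (h ▸ hn)
    rw [Function.update_of_ne hne]
  have hw : w ∈ Function.update v q ∅ q := hF _ w ((truth_congr agree w).mp hφ)
  rw [Function.update_self] at hw
  exact hw

end KFrame

theorem krCons_dia_of_not_hasVar {Sig : Type} {φ : SP Sig} {q : ℕ} (hq : ¬ φ.HasVar q)
    (s : Sig) (τ : SP Sig) : KrCons {(φ, .var q)} (.dia s φ, τ) := by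
  rintro F hF v w ⟨u, -, hu⟩
  exact absurd hu ((KFrame.validSet_singleton.mp hF).not_truth_of_not_hasVar hq v u)

namespace SLO

variable {Sig : Type}

theorem validSet_singleton {A : SLO Sig} {ι : SPImp Sig} : A.ValidSet {ι} ↔ A.Valid ι := by
  simp only [ValidSet, Set.mem_singleton_iff, forall_eq]

/-- The SLO on a meet-semilattice with greatest element in which each `◇_r` is the constant
operation with value `c r`. It provides the counterexample to completeness. -/
abbrev constDia {α : Type} [SemilatticeInf α] [OrderTop α] (c : Sig → α) : SLO Sig where
  carrier := α
  dia r _ := c r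
  mono _ := monotone_const

variable {α : Type} [SemilatticeInf α]

theorem constDia_valid_dia_of_eq_bot [BoundedOrder α] {c : Sig → α} {r : Sig} (hr : c r = ⊥)
    (φ ψ : SP Sig) : (constDia c).Valid (.dia r φ, ψ) :=
  fun _ => hr.trans_le bot_le

theorem constDia_valid_dia_dia_iff [OrderTop α] {c : Sig → α} {r s : Sig} {φ ψ : SP Sig} :
    (constDia c).Valid (.dia s φ, .dia r ψ) ↔ c s ≤ c r :=
  ⟨fun h => h fun _ => ⊤, fun h _ => h⟩

end SLO

theorem exists_card_two_slo_valid_dia_not_valid_dia_dia {Sig : Type} {R S : Sig} (hRS : R ≠ S)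
    (σ τ φ ψ : SP Sig) :
    ∃ A : SLO Sig, Nat.card A.carrier = 2 ∧ A.Valid (.dia R σ, τ) ∧
      ¬ A.Valid (.dia S φ, .dia R ψ) := by
  let c : Sig → Prop := fun r => r ≠ R
  have c_R : c R = ⊥ := eq_false fun h => h rfl
  refine ⟨SLO.constDia c, ?_, SLO.constDia_valid_dia_of_eq_bot c_R σ τ, ?_⟩
  · rw [Nat.card_eq_fintype_card, Fintype.card_prop]
  · rw [SLO.constDia_valid_dia_dia_iff, c_R]
    exact fun h => h hRS.symm

theorem stmt11_general {Sig : Type} {R S : Sig} (hRS : R ≠ S) {σ : SP Sig} {q : ℕ}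
    (hq : ¬ σ.HasVar q) :
    KrCons {(SP.dia R σ, SP.var q)} (SP.dia S (SP.dia R σ), SP.dia R σ) ∧
    (∃ A : SLO Sig, Nat.card A.carrier = 2 ∧ A.Valid (SP.dia R σ, SP.var q) ∧
      ¬ A.Valid (SP.dia S (SP.dia R σ), SP.dia R σ)) ∧
    ¬ SLOCons {(SP.dia R σ, SP.var q)} (SP.dia S (SP.dia R σ), SP.dia R σ) ∧
    ¬ IsCompleteLogic {(SP.dia R σ, SP.var q)} := by
  have hKr : KrCons {(SP.dia R σ, SP.var q)} (SP.dia S (SP.dia R σ), SP.dia R σ) :=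
    krCons_dia_of_not_hasVar (φ := .dia R σ) hq S _
  obtain ⟨A, card_A, hA, hA'⟩ :=
    exists_card_two_slo_valid_dia_not_valid_dia_dia hRS σ (.var q) (.dia R σ) σ
  have hSLO : ¬ SLOCons {(SP.dia R σ, SP.var q)} (SP.dia S (SP.dia R σ), SP.dia R σ) :=
    fun h => hA' (h A (SLO.validSet_singleton.mpr hA))
  exact ⟨hKr, ⟨A, card_A, hA, hA'⟩, hSLO, fun h => hSLO ((h _).mp hKr)⟩

/-- For distinct `R, S` in the signature, an sp-formula `σ` containing
`◇_S` but not `◇_R`, and a variable `q` not occurring in `σ`, the spi-logic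
axiomatised by `{◇_R σ → q}` is not complete:
`{◇_R σ → q} ⊨_Kr ◇_S◇_R σ → ◇_R σ` but there is a SLO validating `◇_R σ → q`
that does not validate `◇_S◇_R σ → ◇_R σ`. -/
theorem stmt11 {Sig : Type} (R S : Sig) (hRS : R ≠ S) (σ : SP Sig)
    (hS : σ.ContainsDia S) (hR : ¬ σ.ContainsDia R) (q : ℕ) (hq : ¬ σ.HasVar q) :
    KrCons ({(SP.dia R σ, SP.var q)} : Set (SPImp Sig))
      (SP.dia S (SP.dia R σ), SP.dia R σ) ∧
    (∃ A : SLO Sig, A.Valid (SP.dia R σ, SP.var q) ∧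
      ¬ A.Valid (SP.dia S (SP.dia R σ), SP.dia R σ)) ∧
    ¬ SLOCons ({(SP.dia R σ, SP.var q)} : Set (SPImp Sig))
      (SP.dia S (SP.dia R σ), SP.dia R σ) ∧
    ¬ IsCompleteLogic ({(SP.dia R σ, SP.var q)} : Set (SPImp Sig)) :=
  have ⟨hKr, ⟨A, _, hA⟩, hSLO, hIncomplete⟩ := stmt11_general hRS hq
  ⟨hKr, ⟨A, hA⟩, hSLO, hIncomplete⟩
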